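/- Let d ≥ 1, let ω ∈ ℝ^d be nonresonant, let f : ℝ^d → ℝ be real analytic and 2π-periodic in each coordinate with mean value f₀, let g : ℝ → ℝ be real analytic, and let c₀ ∈ ℝ satisfy g(c₀) = f₀ and a := g'(c₀) ≠ 0. Then there exist ε̄ > 0 and ζ̄ > 0 such that for every ε with 0 < |ε| < ε̄ and every ζ with |ζ| < ζ̄ there exist a function u(·, ε, ζ) : ℝ^d → ℝ, real analytic and 2π-periodic in each coordinate with zero mean value, and a constant R(ε, ζ) ∈ ℝ, such that the function x(t) = c₀ + ζ + u(ωt, ε, ζ) satisfies ε x''(t) + x'(t) + ε g(x(t)) = ε f(ωt) + ε R(ε, ζ) for all t ∈ ℝ (that is, u solves the range equation obtained by projecting the equation onto the nonzero Fourier modes). -/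

import Mathlib

open MeasureTheory Filter

open scoped Topology NNReal ENNReal Nat

/-!
Write `g (c₀ + y) = g c₀ + a y + Q y`. On functions of zero mean on the torus, with `'` the
derivative along `ω`, the range equation reads `ε u'' + u' + ε a u = ε Π (f - Q (ζ + u))`, `Π` being
the projection onto zero mean. The operator on the left factors as `ε (∂ - l) (∂ - m)` with real
`l` and `m`; as `∂` generates a group of isometries, each `(∂ - l)⁻¹` is a Laplace transform of norm
at most `|l|⁻¹`, and `l m = a` bounds the inverse of `ε⁻¹` times that operator by `|a|⁻¹`,
uniformly in `ε`. Hence `u + A (Q (ζ + u)) = A f` with `A` bounded uniformly in `ε` and `Q` of small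
Lipschitz constant, and the contraction principle applies. No small-divisor condition is needed to
make `u` small: `A` has size `O(ε)` on derivatives, which by nonresonance are dense in zero mean, so
`A f → 0` as `ε → 0`.

Analyticity comes from translating: `A` commutes with translations, so `v ψ = u (· + ψ)` solves
`v + A (Q (ζ + v)) = A (f (· + ψ))`, whose right-hand side is analytic in `ψ` with values in the
continuous functions, and the analytic inverse function theorem applies to `v`.
-/

section TaylorBounds

/-- The Cauchy estimates for `f`, uniform on `s`: at every point of `s` the Taylor series of `f`
converges to `f` on the ball of radius `r`, and its coefficients are at most `C / r ^ k`. -/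
structure TaylorBoundOn (𝕜 : Type*) {V W : Type*} [RCLike 𝕜] [NormedAddCommGroup V]
    [NormedSpace 𝕜 V] [NormedAddCommGroup W] [NormedSpace 𝕜 W] (f : V → W) (s : Set V)
    (r C : ℝ≥0) : Prop where
  norm_mul_pow_le : ∀ x ∈ s, ∀ k : ℕ,
    ‖(k ! : 𝕜)⁻¹ • iteratedFDeriv 𝕜 k f x‖ * (r : ℝ) ^ k ≤ C
  hasSum : ∀ x ∈ s, ∀ y : V, ‖y‖ < r →
    HasSum (fun k : ℕ => ((k ! : 𝕜)⁻¹ • iteratedFDeriv 𝕜 k f x) fun _ => y) (f (x + y))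

theorem exists_changeOrigin_mul_pow_le {𝕜 V W : Type*} [NontriviallyNormedField 𝕜]
    [NormedAddCommGroup V] [NormedSpace 𝕜 V] [NormedAddCommGroup W] [NormedSpace 𝕜 W]
    (p : FormalMultilinearSeries 𝕜 V W) {r r' : ℝ≥0} (hr : (r + r' : ℝ≥0∞) < p.radius) :
    ∃ C : ℝ≥0, ∀ y : V, ‖y‖₊ ≤ r → ∀ k : ℕ, ‖p.changeOrigin y k‖₊ * r' ^ k ≤ C := by
  have hsum := p.changeOriginSeries_summable_aux₁ hr
  have hsum_sigma := NNReal.summable_sigma.1 hsum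
  have hr_radius : (r : ℝ≥0∞) < p.radius := le_self_add.trans_lt hr
  refine ⟨_, fun y hy k => le_trans ?_ ((hsum_sigma.2.le_tsum k fun _ _ => zero_le).trans
    (hsum.tsum_sigma' hsum_sigma.1).ge)⟩
  have hy_radius : (‖y‖₊ : ℝ≥0∞) < p.radius := (ENNReal.coe_le_coe.2 hy).trans_lt hr_radius
  dsimp only
  rw [NNReal.tsum_mul_right]
  gcongr
  refine (p.nnnorm_changeOrigin_le k hy_radius).trans ?_
  exact Summable.tsum_le_tsum (fun s => by gcongr)
    (p.changeOriginSeries_summable_aux₂ hy_radius k)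
    (p.changeOriginSeries_summable_aux₂ hr_radius k)

variable {𝕜 V W : Type*} [RCLike 𝕜] [NormedAddCommGroup V] [NormedSpace 𝕜 V]
  [NormedAddCommGroup W] [NormedSpace 𝕜 W]

theorem TaylorBoundOn.mono {f : V → W} {s t : Set V} {r r' C C' : ℝ≥0}
    (h : TaylorBoundOn 𝕜 f t r C) (hst : s ⊆ t) (hr : r' ≤ r) (hC : C ≤ C') :
    TaylorBoundOn 𝕜 f s r' C' where
  norm_mul_pow_le x hx k :=
    calc ‖(k ! : 𝕜)⁻¹ • iteratedFDeriv 𝕜 k f x‖ * (r' : ℝ) ^ k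
      _ ≤ ‖(k ! : 𝕜)⁻¹ • iteratedFDeriv 𝕜 k f x‖ * (r : ℝ) ^ k := by gcongr
      _ ≤ C := h.norm_mul_pow_le x (hst hx) k
      _ ≤ C' := by exact_mod_cast hC
  hasSum x hx y hy := h.hasSum x (hst hx) y (hy.trans_le (by exact_mod_cast hr))

theorem TaylorBoundOn.union {f : V → W} {s t : Set V} {r C : ℝ≥0}
    (hs : TaylorBoundOn 𝕜 f s r C) (ht : TaylorBoundOn 𝕜 f t r C) :
    TaylorBoundOn 𝕜 f (s ∪ t) r C where
  norm_mul_pow_le x hx := hx.elim (hs.norm_mul_pow_le x) (ht.norm_mul_pow_le x)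
  hasSum x hx := hx.elim (hs.hasSum x) (ht.hasSum x)

variable [CompleteSpace W]

theorem norm_inv_factorial_smul_iteratedFDeriv_le {f : V → W} {x : V}
    {p : FormalMultilinearSeries 𝕜 V W} {r : ℝ≥0∞} (hp : HasFPowerSeriesOnBall f p x r) (k : ℕ) :
    ‖(k ! : 𝕜)⁻¹ • iteratedFDeriv 𝕜 k f x‖ ≤ ‖p k‖ := by
  have norm_le : ‖iteratedFDeriv 𝕜 k f x‖ ≤ k ! * ‖p k‖ := by
    refine ContinuousMultilinearMap.opNorm_le_bound (by positivity) fun v => ?_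
    rw [hp.iteratedFDeriv_eq_sum_of_completeSpace]
    calc ‖∑ σ : Equiv.Perm (Fin k), p k fun i => v (σ i)‖
      _ ≤ ∑ _σ : Equiv.Perm (Fin k), ‖p k‖ * ∏ i, ‖v i‖ :=
        norm_sum_le_of_le _ fun σ _ => ((p k).le_opNorm _).trans_eq <| by
          rw [Equiv.prod_comp σ fun i => ‖v i‖]
      _ = k ! * ‖p k‖ * ∏ i, ‖v i‖ := by simp [Fintype.card_perm, mul_assoc]
  rw [norm_smul, norm_inv, RCLike.norm_natCast, inv_mul_le_iff₀ (by positivity)]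
  exact norm_le

theorem exists_taylorBoundOn_nhds {f : V → W} {x₀ : V} (hf : AnalyticAt 𝕜 f x₀) :
    ∃ s ∈ 𝓝 x₀, ∃ r > 0, ∃ C, TaylorBoundOn 𝕜 f s r C := by
  obtain ⟨p, R, hp⟩ := hf
  obtain ⟨R', hR'_pos, hR'⟩ := ENNReal.lt_iff_exists_nnreal_btwn.1 hp.r_pos
  set r : ℝ≥0 := R' / 2
  have hr : (r + r : ℝ≥0∞) = R' := by rw [← ENNReal.coe_add, add_halves]
  have hr_pos : 0 < r := half_pos (by exact_mod_cast hR'_pos)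
  obtain ⟨C, hC⟩ := exists_changeOrigin_mul_pow_le p ((hr.trans_lt hR').trans_le hp.r_le)
  have hpx : ∀ x ∈ Metric.ball x₀ r, ‖x - x₀‖₊ ≤ r ∧
      HasFPowerSeriesOnBall f (p.changeOrigin (x - x₀)) x (R - ‖x - x₀‖₊) := fun x hx => by
    have hx' : ‖x - x₀‖₊ < r := by exact_mod_cast mem_ball_iff_norm.1 hx
    have hxR : (‖x - x₀‖₊ : ℝ≥0∞) < R :=
      (ENNReal.coe_lt_coe.2 hx').trans_le (le_self_add.trans (hr.trans_le hR'.le))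
    refine ⟨hx'.le, ?_⟩
    simpa only [add_sub_cancel] using hp.changeOrigin hxR
  refine ⟨Metric.ball x₀ r, Metric.ball_mem_nhds x₀ hr_pos, r, hr_pos, C, ?_, ?_⟩
  · intro x hx k
    calc ‖(k ! : 𝕜)⁻¹ • iteratedFDeriv 𝕜 k f x‖ * (r : ℝ) ^ k
      _ ≤ ‖p.changeOrigin (x - x₀) k‖ * (r : ℝ) ^ k := by
        gcongr
        exact norm_inv_factorial_smul_iteratedFDeriv_le (hpx x hx).2 k
      _ ≤ C := by exact_mod_cast hC _ (hpx x hx).1 k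
  · intro x hx y hy
    have hyR : y ∈ Metric.eball 0 (R - ‖x - x₀‖₊) := by
      rw [Metric.mem_eball, edist_zero_right]
      calc ‖y‖ₑ < r := ENNReal.coe_lt_coe.2 (by exact_mod_cast hy)
        _ ≤ R - ‖x - x₀‖₊ := ENNReal.le_sub_of_add_le_right ENNReal.coe_ne_top <|
          (add_le_add_right (ENNReal.coe_le_coe.2 (hpx x hx).1) _).trans (hr.trans_le hR'.le)
    simpa using (hpx x hx).2.hasSum_iteratedFDeriv hyR

theorem exists_taylorBoundOn_of_isCompact {f : V → W} {K : Set V} (hK : IsCompact K)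
    (hf : AnalyticOnNhd 𝕜 f K) : ∃ r > 0, ∃ C, TaylorBoundOn 𝕜 f K r C := by
  refine hK.induction_on (p := fun s => ∃ r > 0, ∃ C, TaylorBoundOn 𝕜 f s r C) ?_ ?_ ?_ ?_
  · exact ⟨1, one_pos, 0, by simp, by simp⟩
  · rintro s t hst ⟨r, hr, C, h⟩
    exact ⟨r, hr, C, h.mono hst le_rfl le_rfl⟩
  · rintro s t ⟨r, hr, C, hs⟩ ⟨r', hr', C', ht⟩
    exact ⟨min r r', lt_min hr hr', max C C', (hs.mono subset_rfl (by simp) (by simp)).union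
      (ht.mono subset_rfl (by simp) (by simp))⟩
  · intro x hx
    obtain ⟨s, hs, h⟩ := exists_taylorBoundOn_nhds (hf x hx)
    exact ⟨s, mem_nhdsWithin_of_mem_nhds hs, h⟩

end TaylorBounds

section Superposition

variable {𝕜 K V W : Type*} [TopologicalSpace K] [CompactSpace K]
  [NormedAddCommGroup V] [NormedAddCommGroup W]

section PointwiseMultilinear

variable [NontriviallyNormedField 𝕜] [NormedSpace 𝕜 V] [NormedSpace 𝕜 W]

/-- The multilinear map on continuous functions obtained by letting a continuous family of
multilinear maps act pointwise. -/
noncomputable def pointwiseMultilinear {k : ℕ} (q : C(K, V [×k]→L[𝕜] W)) :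
    C(K, V) [×k]→L[𝕜] C(K, W) :=
  MultilinearMap.mkContinuous
    { toFun := fun v => ⟨fun x => q x fun i => v i x, by fun_prop⟩
      map_update_add' := fun m i v w => by
        ext x
        have eval_update := fun c => Function.comp_update (fun u : C(K, V) => u x) m i c
        simp only [Function.comp_def] at eval_update
        simp [eval_update]
      map_update_smul' := fun m i c v => by
        ext x
        have eval_update := fun c => Function.comp_update (fun u : C(K, V) => u x) m i c
        simp only [Function.comp_def] at eval_update
        simp [eval_update] }
    ‖q‖ fun v => (ContinuousMap.norm_le _ (by positivity)).2 fun x =>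
      ((q x).le_opNorm _).trans <| by
        gcongr with i
        · exact q.norm_coe_le_norm x
        · exact (v i).norm_coe_le_norm x

theorem norm_pointwiseMultilinear_le {k : ℕ} (q : C(K, V [×k]→L[𝕜] W)) :
    ‖pointwiseMultilinear q‖ ≤ ‖q‖ :=
  MultilinearMap.mkContinuous_norm_le _ (norm_nonneg q) _

theorem analyticAt_zero_of_hasSum_pointwise [CompleteSpace W] {q : ∀ k : ℕ, C(K, V [×k]→L[𝕜] W)}
    {r C : ℝ≥0} (hr : 0 < r) (hq : ∀ k, ‖q k‖ * (r : ℝ) ^ k ≤ C) {N : C(K, V) → C(K, W)}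
    (hN : ∀ (v : C(K, V)) (x : K), ‖v x‖ < r → HasSum (fun k => q k x fun _ => v x) (N v x)) :
    AnalyticAt 𝕜 N 0 := by
  let p : FormalMultilinearSeries 𝕜 C(K, V) C(K, W) := fun k => pointwiseMultilinear (q k)
  have le_radius : (r : ℝ≥0∞) ≤ p.radius := p.le_radius_of_bound C fun k =>
    (mul_le_mul_of_nonneg_right (norm_pointwiseMultilinear_le (q k)) (by positivity)).trans (hq k)
  refine ⟨p, r, le_radius, by exact_mod_cast hr, fun {v} hv => ?_⟩
  have hsum := p.hasSum (Metric.eball_subset_eball le_radius hv)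
  have hv' : ‖v‖ < r := by simpa [← ofReal_norm, ENNReal.ofReal_lt_coe_iff] using hv
  have sum_eq : p.sum v = N v := by
    ext x
    exact (hsum.mapL (ContinuousMap.evalCLM 𝕜 x)).unique
      (hN v x ((v.norm_coe_le_norm x).trans_lt hv'))
  rwa [zero_add, ← sum_eq]

end PointwiseMultilinear

variable [RCLike 𝕜] [NormedSpace 𝕜 V] [NormedSpace 𝕜 W] [CompleteSpace W]

theorem analyticAt_continuousMap_comp {Q : C(V, W)} {v₀ : C(K, V)}
    (hQ : AnalyticOnNhd 𝕜 Q (Set.range v₀)) :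
    AnalyticAt 𝕜 (fun v : C(K, V) => Q.comp v) v₀ := by
  obtain ⟨r, hr, C, taylor⟩ := exists_taylorBoundOn_of_isCompact (isCompact_range v₀.continuous) hQ
  have continuous_coeff (k : ℕ) :
      Continuous fun x => (k ! : 𝕜)⁻¹ • iteratedFDeriv 𝕜 k Q (v₀ x) := by
    have continuous_deriv : Continuous fun x => iteratedFDeriv 𝕜 k Q (v₀ x) :=
      (hQ.iteratedFDeriv k).continuousOn.comp_continuous v₀.continuous Set.mem_range_self
    fun_prop
  have analytic_zero : AnalyticAt 𝕜 (fun v : C(K, V) => Q.comp (v₀ + v)) 0 := by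
    refine analyticAt_zero_of_hasSum_pointwise (q := fun k => ⟨_, continuous_coeff k⟩) hr
      (C := C) (fun k => ?_) fun v x hv => taylor.hasSum _ (Set.mem_range_self x) _ hv
    rw [← le_div_iff₀ (by positivity)]
    refine (ContinuousMap.norm_le _ (by positivity)).2 fun x => ?_
    rw [le_div_iff₀ (by positivity)]
    exact taylor.norm_mul_pow_le _ (Set.mem_range_self x) k
  have analytic_sub : AnalyticAt 𝕜 (fun v : C(K, V) => v - v₀) v₀ :=
    analyticAt_id.sub analyticAt_const
  simpa [Function.comp_def] using analytic_zero.comp_of_eq analytic_sub (sub_self v₀)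

end Superposition

section NonlinearEquations

theorem analyticAt_of_comp_of_hasFDerivAt_equiv {𝕜 X E F : Type*} [RCLike 𝕜]
    [NormedAddCommGroup X] [NormedSpace 𝕜 X] [NormedAddCommGroup E] [NormedSpace 𝕜 E]
    [CompleteSpace E] [NormedAddCommGroup F] [NormedSpace 𝕜 F] [CompleteSpace F]
    {G : E → F} {v : X → E} {x₀ : X} {e : E ≃L[𝕜] F} (hG : AnalyticAt 𝕜 G (v x₀))
    (he : HasFDerivAt G (e : E →L[𝕜] F) (v x₀)) (hv : ContinuousAt v x₀)
    (hGv : AnalyticAt 𝕜 (fun x => G (v x)) x₀) : AnalyticAt 𝕜 v x₀ := by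
  have contDiff : ContDiffAt 𝕜 (⊤ : WithTop ℕ∞) G (v x₀) := hG.contDiffAt
  let inv : F → E := contDiff.localInverse he (by simp)
  have inv_analytic : AnalyticAt 𝕜 inv (G (v x₀)) :=
    analyticWithinAt_univ.1 <|
      contDiffWithinAt_omega_iff_analyticWithinAt.1 (contDiff.to_localInverse he (by simp))
  have inv_comp : ∀ᶠ y in 𝓝 (v x₀), inv (G y) = y :=
    (contDiff.hasStrictFDerivAt' he (by simp)).eventually_left_inverse
  exact (AnalyticAt.comp (f := fun x => G (v x)) inv_analytic hGv).congr (hv.eventually inv_comp)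

theorem analyticAt_of_add_comp {𝕜 X E : Type*} [RCLike 𝕜] [NormedAddCommGroup X]
    [NormedSpace 𝕜 X] [NormedAddCommGroup E] [NormedSpace 𝕜 E] [CompleteSpace E]
    {B : E → E} {v : X → E} {x₀ : X} {K : ℝ≥0} (hB : AnalyticAt 𝕜 B (v x₀))
    (hlip : LipschitzWith K B) (hK : K < 1) (hv : ContinuousAt v x₀)
    (h : AnalyticAt 𝕜 (fun x => v x + B (v x)) x₀) : AnalyticAt 𝕜 v x₀ := by
  have norm_lt : ‖-fderiv 𝕜 B (v x₀)‖ < 1 := by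
    rw [norm_neg]
    exact (norm_fderiv_le_of_lipschitz 𝕜 hlip).trans_lt (by exact_mod_cast hK)
  let e : E ≃L[𝕜] E := ContinuousLinearEquiv.unitsEquiv 𝕜 E (Units.oneSub _ norm_lt)
  have he : (e : E →L[𝕜] E) = ContinuousLinearMap.id 𝕜 E + fderiv 𝕜 B (v x₀) :=
    sub_neg_eq_add 1 (fderiv 𝕜 B (v x₀))
  refine analyticAt_of_comp_of_hasFDerivAt_equiv (e := e) (G := fun y => y + B y)
    (analyticAt_id.add hB) ?_ hv h
  rw [he]
  exact (hasFDerivAt_id _).add hB.differentiableAt.hasFDerivAt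

theorem exists_add_eq_of_lipschitzWith {E : Type*} [NormedAddCommGroup E] [CompleteSpace E]
    {B : E → E} {K : ℝ≥0} (hB : LipschitzWith K B) (hK : K < 1) (b : E) :
    ∃ x, x + B x = b ∧ (1 - K) * ‖x‖ ≤ ‖b - B 0‖ := by
  have contracting : ContractingWith K fun x => b - B x :=
    ⟨hK, by simpa using (LipschitzWith.const b).sub hB⟩
  refine ⟨contracting.fixedPoint, ?_, ?_⟩
  · nth_rw 1 [← contracting.fixedPoint_isFixedPt.eq]
    exact sub_add_cancel b _
  · have dist_le := contracting.dist_fixedPoint_le 0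
    rwa [dist_zero_left, dist_zero_left,
      le_div_iff₀ contracting.one_sub_K_pos, mul_comm] at dist_le

theorem exists_lipschitzWith_eventuallyEq_remainder {E : Type*} [NormedAddCommGroup E]
    [NormedSpace ℝ E] {g : E → ℝ} {g' : E →L[ℝ] ℝ} {c : E} (hg : HasStrictFDerivAt g g' c)
    {κ : ℝ≥0} (hκ : 0 < κ) :
    ∃ Q : E → ℝ, LipschitzWith κ Q ∧ Q =ᶠ[𝓝 0] fun y => g (c + y) - g c - g' y := by
  obtain ⟨s, hs, approx⟩ := hg.approximates_deriv_on_nhds (Or.inr hκ)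
  obtain ⟨h, h_lip, h_eq⟩ := approx.lipschitzOnWith.extend_real
  refine ⟨fun y => h (c + y) - h c, fun y z => ?_, ?_⟩
  · simpa using h_lip (c + y) (c + z)
  · have tendsto : Tendsto (fun y => c + y) (𝓝 0) (𝓝 c) := by
      simpa using (continuous_const_add c).tendsto 0
    filter_upwards [tendsto hs] with y hy
    have h_add := h_eq hy
    have h_base := h_eq (mem_of_mem_nhds hs)
    simp only [Pi.sub_apply, map_add] at h_add h_base
    rw [← h_add, ← h_base]
    ring

end NonlinearEquations

/-- A strongly continuous one-parameter group of linear contractions (hence of isometries) of a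
normed space. -/
structure IsometricFlow (E : Type*) [NormedAddCommGroup E] [NormedSpace ℝ E] where
  toFun : ℝ → E →L[ℝ] E
  map_zero_apply : ∀ x, toFun 0 x = x
  map_add_apply : ∀ s t x, toFun (s + t) x = toFun s (toFun t x)
  norm_apply_le : ∀ t x, ‖toFun t x‖ ≤ ‖x‖
  continuous_apply : ∀ x, Continuous fun t => toFun t x

namespace IsometricFlow

variable {E F : Type*} [NormedAddCommGroup E] [NormedSpace ℝ E] [NormedAddCommGroup F]
  [NormedSpace ℝ F]

instance : CoeFun (IsometricFlow E) fun _ => ℝ → E →L[ℝ] E :=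
  ⟨toFun⟩

/-- The flow run backwards in time. -/
def reverse (T : IsometricFlow E) : IsometricFlow E where
  toFun t := T (-t)
  map_zero_apply x := by rw [neg_zero, T.map_zero_apply]
  map_add_apply s t x := by rw [neg_add, T.map_add_apply]
  norm_apply_le t := T.norm_apply_le (-t)
  continuous_apply x := (T.continuous_apply x).comp continuous_neg

/-- `T.HasFlowDeriv x y` says that `x` lies in the domain of the generator `D` of the flow `T`, and
`D x = y`. -/
def HasFlowDeriv (T : IsometricFlow E) (x y : E) : Prop :=
  HasDerivAt (fun t => T t x) y 0

variable {T : IsometricFlow E} {T' : IsometricFlow F}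

namespace HasFlowDeriv

theorem hasDerivAt_clm_comp {x y : E} (h : T.HasFlowDeriv x y) (L : E →L[ℝ] F) :
    HasDerivAt (fun t => L (T t x)) (L y) 0 :=
  L.hasFDerivAt.comp_hasDerivAt 0 h

theorem hasDerivAt {x y : E} (h : T.HasFlowDeriv x y) (s : ℝ) :
    HasDerivAt (fun t => T t x) (T s y) s := by
  have shifted := HasDerivAt.comp_sub_const s s <| (sub_self s).symm ▸ h.hasDerivAt_clm_comp (T s)
  simpa only [← T.map_add_apply, add_sub_cancel] using shifted

theorem fun_add {x y x' y' : E} (h : T.HasFlowDeriv x y) (h' : T.HasFlowDeriv x' y') :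
    T.HasFlowDeriv (x + x') (y + y') := by
  simpa only [HasFlowDeriv, map_add] using HasDerivAt.fun_add h h'

theorem const_smul {x y : E} (c : ℝ) (h : T.HasFlowDeriv x y) :
    T.HasFlowDeriv (c • x) (c • y) := by
  simpa only [HasFlowDeriv, map_smul] using HasDerivAt.fun_const_smul c h

theorem map {x y : E} (h : T.HasFlowDeriv x y) (L : E →L[ℝ] F)
    (hL : ∀ t z, L (T t z) = T' t (L z)) : T'.HasFlowDeriv (L x) (L y) := by
  simpa only [HasFlowDeriv, hL] using h.hasDerivAt_clm_comp L

theorem map_eq_zero {x y : E} (h : T.HasFlowDeriv x y) (L : E →L[ℝ] F)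
    (hL : ∀ t z, L (T t z) = L z) : L y = 0 := by
  have deriv_const := h.hasDerivAt_clm_comp L
  simp only [hL] at deriv_const
  exact deriv_const.unique (hasDerivAt_const 0 (L x))

theorem of_reverse {x y : E} (h : T.reverse.HasFlowDeriv x y) : T.HasFlowDeriv x (-y) := by
  have flipped := HasDerivAt.scomp_of_eq (0 : ℝ) h (hasDerivAt_neg (0 : ℝ)) neg_zero.symm
  simpa [HasFlowDeriv, Function.comp_def, reverse] using flipped

theorem eq_zero_of_eigenvector {l : ℝ} (hl : l ≠ 0) {z : E} (h : T.HasFlowDeriv z (l • z)) :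
    z = 0 := by
  have deriv_zero (s : ℝ) : HasDerivAt (fun t => Real.exp (-l * t) • T t z) 0 s := by
    have exp_deriv := ((hasDerivAt_id s).const_mul (-l)).exp
    refine (exp_deriv.fun_smul (h.hasDerivAt s)).congr_deriv ?_
    simp only [id_eq, map_smul]
    module
  have exp_smul : Real.exp (-1) • T l⁻¹ z = z := by
    have const := is_const_of_deriv_eq_zero (fun s => (deriv_zero s).differentiableAt)
      (fun s => (deriv_zero s).deriv) l⁻¹ 0
    simpa [hl, T.map_zero_apply] using const
  by_contra hz
  have norm_lt : ‖z‖ < ‖z‖ :=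
    calc ‖z‖ = Real.exp (-1) * ‖T l⁻¹ z‖ := by
          rw [← abs_of_pos (Real.exp_pos (-1)), ← Real.norm_eq_abs, ← norm_smul, exp_smul]
      _ ≤ Real.exp (-1) * ‖z‖ := by gcongr; exact T.norm_apply_le _ _
      _ < ‖z‖ := mul_lt_of_lt_one_left (norm_pos_iff.2 hz) (by simp)
  exact norm_lt.false

end HasFlowDeriv

/-- The range of the generator of a flow. -/
def generatorRange (T : IsometricFlow E) : Submodule ℝ E where
  carrier := {y | ∃ x, T.HasFlowDeriv x y}
  zero_mem' := ⟨0, by simpa only [HasFlowDeriv, map_zero] using hasDerivAt_const 0 (0 : E)⟩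
  add_mem' := fun ⟨_, h⟩ ⟨_, h'⟩ => ⟨_, h.fun_add h'⟩
  smul_mem' := fun c _ ⟨_, h⟩ => ⟨_, h.const_smul c⟩

theorem map_mem_closure_generatorRange (L : E →L[ℝ] F) (hL : ∀ t z, L (T t z) = T' t (L z)) {x : E}
    (hx : x ∈ closure (T.generatorRange : Set E)) :
    L x ∈ closure (T'.generatorRange : Set F) :=
  map_mem_closure L.continuous hx fun _ ⟨z, hz⟩ => ⟨L z, hz.map L hL⟩

section Laplace

variable (T) {μ : ℝ}

theorem continuous_exp_smul (μ : ℝ) (x : E) :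
    Continuous fun t => Real.exp (-μ * t) • T t x := by
  have := T.continuous_apply x
  fun_prop

theorem norm_exp_smul_le (μ t : ℝ) (x : E) :
    ‖Real.exp (-μ * t) • T t x‖ ≤ Real.exp (-μ * t) * ‖x‖ := by
  rw [norm_smul, Real.norm_eq_abs, Real.abs_exp]
  gcongr
  exact T.norm_apply_le t x

theorem integrableOn_exp_smul (hμ : 0 < μ) (a : ℝ) (x : E) :
    IntegrableOn (fun t => Real.exp (-μ * t) • T t x) (Set.Ioi a) :=
  ((exp_neg_integrableOn_Ioi a hμ).mul_const ‖x‖).mono'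
    (T.continuous_exp_smul μ x).aestronglyMeasurable (.of_forall fun t => T.norm_exp_smul_le μ t x)

/-- The Laplace transform `x ↦ ∫₀^∞ e^{-μt} T_t x dt` of the flow. -/
noncomputable def laplace (hμ : 0 < μ) : E →L[ℝ] E :=
  LinearMap.mkContinuous
    { toFun := fun x => ∫ t in Set.Ioi 0, Real.exp (-μ * t) • T t x
      map_add' := fun x y => by
        simp only [map_add, smul_add]
        exact integral_add (T.integrableOn_exp_smul hμ 0 x) (T.integrableOn_exp_smul hμ 0 y)
      map_smul' := fun c x => by
        simp only [map_smul, RingHom.id_apply, smul_comm _ c, integral_smul] }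
    μ⁻¹ fun x =>
      calc ‖∫ t in Set.Ioi 0, Real.exp (-μ * t) • T t x‖
        _ ≤ ∫ t in Set.Ioi 0, Real.exp (-μ * t) * ‖x‖ :=
          norm_integral_le_of_norm_le ((exp_neg_integrableOn_Ioi 0 hμ).mul_const ‖x‖)
            (.of_forall fun t => T.norm_exp_smul_le μ t x)
        _ = μ⁻¹ * ‖x‖ := by
          rw [integral_mul_const, integral_exp_mul_Ioi (by linarith)]
          simp

theorem laplace_apply (hμ : 0 < μ) (x : E) :
    T.laplace hμ x = ∫ t in Set.Ioi 0, Real.exp (-μ * t) • T t x :=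
  rfl

theorem norm_laplace_apply_le (hμ : 0 < μ) (x : E) : ‖T.laplace hμ x‖ ≤ μ⁻¹ * ‖x‖ :=
  (T.laplace hμ).le_of_opNorm_le (LinearMap.mkContinuous_norm_le _ (by positivity) _) x

variable [CompleteSpace E]

theorem apply_laplace (hμ : 0 < μ) (s : ℝ) (x : E) :
    T s (T.laplace hμ x) =
      Real.exp (μ * s) • (T.laplace hμ x - ∫ t in (0 : ℝ)..s, Real.exp (-μ * t) • T t x) := by
  have shift (t : ℝ) :
      T s (Real.exp (-μ * t) • T t x) =
        Real.exp (μ * s) • Real.exp (-μ * (t + s)) • T (t + s) x := by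
    rw [map_smul, ← T.map_add_apply, add_comm s t, smul_smul, ← Real.exp_add]
    ring_nf
  rw [laplace_apply, ← intervalIntegral.integral_Ioi_sub_Ioi' (T.integrableOn_exp_smul hμ 0 x)
      (T.integrableOn_exp_smul hμ s x), sub_sub_cancel,
    ← (T s).integral_comp_comm (T.integrableOn_exp_smul hμ 0 x)]
  simp only [shift]
  rw [integral_smul]
  have preimage : (fun t => t + s) ⁻¹' Set.Ioi s = Set.Ioi 0 := by simp
  rw [← preimage, (measurePreserving_add_right volume s).setIntegral_preimage_emb
    (measurableEmbedding_addRight s) (fun t => Real.exp (-μ * t) • T t x)]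

theorem hasFlowDeriv_laplace (hμ : 0 < μ) (x : E) :
    T.HasFlowDeriv (T.laplace hμ x) (μ • T.laplace hμ x - x) := by
  have exp_deriv := ((hasDerivAt_id (0 : ℝ)).const_mul μ).exp
  have integral_deriv :=
    (Continuous.integral_hasStrictDerivAt (T.continuous_exp_smul μ x) 0 0).hasDerivAt
  have product_deriv := exp_deriv.fun_smul (integral_deriv.const_sub (T.laplace hμ x))
  simp only [HasFlowDeriv, T.apply_laplace hμ]
  refine product_deriv.congr_deriv ?_
  simp [T.map_zero_apply, sub_eq_neg_add]

end Laplace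

/-- The inverse of `D - l` for the generator `D` of the flow, with the junk value `0` at `l = 0`. -/
noncomputable def resolvent (T : IsometricFlow E) (l : ℝ) : E →L[ℝ] E :=
  if hpos : 0 < l then -T.laplace hpos
  else if hneg : l < 0 then T.reverse.laplace (neg_pos.2 hneg)
  else 0

variable (T) {l : ℝ}

theorem norm_resolvent_apply_le (l : ℝ) (x : E) : ‖T.resolvent l x‖ ≤ |l|⁻¹ * ‖x‖ := by
  unfold resolvent
  split_ifs with hpos hneg
  · simpa [abs_of_pos hpos] using T.norm_laplace_apply_le hpos x
  · simpa [abs_of_neg hneg] using T.reverse.norm_laplace_apply_le (neg_pos.2 hneg) x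
  · simp only [zero_apply, norm_zero]
    positivity

variable [CompleteSpace E]

theorem hasFlowDeriv_resolvent (hl : l ≠ 0) (x : E) :
    T.HasFlowDeriv (T.resolvent l x) (l • T.resolvent l x + x) := by
  unfold resolvent
  split_ifs with hpos hneg
  · have := (T.hasFlowDeriv_laplace hpos x).const_smul (-1)
    simpa [sub_eq_neg_add, add_comm] using this
  · have := (T.reverse.hasFlowDeriv_laplace (neg_pos.2 hneg) x).of_reverse
    simpa [add_comm] using this
  · exact absurd (le_antisymm (not_lt.1 hpos) (not_lt.1 hneg)) hl

variable {T}

theorem eq_resolvent_of_hasFlowDeriv (hl : l ≠ 0) {x y : E} (h : T.HasFlowDeriv y (l • y + x)) :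
    y = T.resolvent l x := by
  have eigen : T.HasFlowDeriv (y + (-1 : ℝ) • T.resolvent l x)
      (l • (y + (-1 : ℝ) • T.resolvent l x)) := by
    convert h.fun_add ((T.hasFlowDeriv_resolvent hl x).const_smul (-1)) using 1
    module
  rw [← sub_eq_zero, sub_eq_add_neg, ← neg_one_smul ℝ]
  exact eigen.eq_zero_of_eigenvector hl

theorem resolvent_of_hasFlowDeriv (hl : l ≠ 0) {x y : E} (h : T.HasFlowDeriv x y) :
    T.resolvent l y = x + l • T.resolvent l x := by
  refine (eq_resolvent_of_hasFlowDeriv hl ?_).symm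
  convert h.fun_add ((T.hasFlowDeriv_resolvent hl x).const_smul l) using 1
  module

theorem map_resolvent [CompleteSpace F] (hl : l ≠ 0) (L : E →L[ℝ] F)
    (hL : ∀ t z, L (T t z) = T' t (L z)) (x : E) :
    L (T.resolvent l x) = T'.resolvent l (L x) := by
  refine eq_resolvent_of_hasFlowDeriv hl ?_
  simpa only [map_add, map_smul] using (T.hasFlowDeriv_resolvent hl x).map L hL

end IsometricFlow

section CharacteristicRoots

/-- The root of `ε X² + X + ε a` that behaves like `-1 / ε` as `ε → 0`. -/
noncomputable def fastRoot (a ε : ℝ) : ℝ :=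
  -(1 + √(1 - 4 * a * ε ^ 2)) / (2 * ε)

/-- The root of `ε X² + X + ε a` that behaves like `-ε a` as `ε → 0`. -/
noncomputable def slowRoot (a ε : ℝ) : ℝ :=
  a / fastRoot a ε

variable {a ε : ℝ}

theorem fastRoot_ne_zero (hε : ε ≠ 0) : fastRoot a ε ≠ 0 := by
  have : 0 ≤ √(1 - 4 * a * ε ^ 2) := Real.sqrt_nonneg _
  exact div_ne_zero (neg_ne_zero.2 (by positivity)) (by positivity)

theorem slowRoot_ne_zero (ha : a ≠ 0) (hε : ε ≠ 0) : slowRoot a ε ≠ 0 :=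
  div_ne_zero ha (fastRoot_ne_zero hε)

theorem fastRoot_mul_slowRoot (hε : ε ≠ 0) : fastRoot a ε * slowRoot a ε = a :=
  mul_div_cancel₀ a (fastRoot_ne_zero hε)

theorem mul_fastRoot_add_slowRoot (hε : ε ≠ 0) (hdisc : 4 * a * ε ^ 2 ≤ 1) :
    ε * (fastRoot a ε + slowRoot a ε) = -1 := by
  have root : ε * fastRoot a ε ^ 2 + fastRoot a ε + ε * a = 0 := by
    have sq := Real.sq_sqrt (sub_nonneg.2 hdisc)
    unfold fastRoot
    generalize √(1 - 4 * a * ε ^ 2) = q at sq ⊢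
    field_simp
    linear_combination sq
  have hl := fastRoot_ne_zero (a := a) hε
  unfold slowRoot
  field_simp
  linear_combination root

theorem abs_inv_fastRoot_le : |fastRoot a ε|⁻¹ ≤ 2 * |ε| := by
  have one_le : 1 ≤ |1 + √(1 - 4 * a * ε ^ 2)| :=
    (le_add_of_nonneg_right (Real.sqrt_nonneg _)).trans (le_abs_self _)
  rw [fastRoot, abs_div, abs_neg, inv_div, abs_mul, abs_two]
  exact div_le_self (by positivity) one_le

end CharacteristicRoots

namespace IsometricFlow

variable {E F : Type*} [NormedAddCommGroup E] [NormedSpace ℝ E] [NormedAddCommGroup F]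
  [NormedSpace ℝ F]

/-- The operator `ε (ε D² + D + ε a)⁻¹`, where `D` is the generator of the flow, obtained by
factoring the polynomial. -/
noncomputable def dampedInverse (T : IsometricFlow E) (a ε : ℝ) : E →L[ℝ] E :=
  T.resolvent (fastRoot a ε) ∘L T.resolvent (slowRoot a ε)

variable (T : IsometricFlow E) {T' : IsometricFlow F} {a ε : ℝ}

theorem norm_dampedInverse_apply_le (hε : ε ≠ 0) (x : E) :
    ‖T.dampedInverse a ε x‖ ≤ |a|⁻¹ * ‖x‖ :=
  calc ‖T.dampedInverse a ε x‖
    _ ≤ |fastRoot a ε|⁻¹ * (|slowRoot a ε|⁻¹ * ‖x‖) :=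
      (T.norm_resolvent_apply_le _ _).trans <| by
        gcongr
        exact T.norm_resolvent_apply_le _ _
    _ = |a|⁻¹ * ‖x‖ := by
      rw [← mul_assoc, ← mul_inv, ← abs_mul, fastRoot_mul_slowRoot hε]

variable [CompleteSpace E]

theorem map_dampedInverse [CompleteSpace F] (ha : a ≠ 0) (hε : ε ≠ 0) (L : E →L[ℝ] F)
    (hL : ∀ t z, L (T t z) = T' t (L z)) (x : E) :
    L (T.dampedInverse a ε x) = T'.dampedInverse a ε (L x) := by
  simp only [dampedInverse, ContinuousLinearMap.comp_apply,
    map_resolvent (fastRoot_ne_zero hε) L hL, map_resolvent (slowRoot_ne_zero ha hε) L hL]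

theorem exists_hasFlowDeriv_dampedInverse (ha : a ≠ 0) (hε : ε ≠ 0)
    (hdisc : 4 * a * ε ^ 2 ≤ 1) (x : E) :
    ∃ y' y'', T.HasFlowDeriv (T.dampedInverse a ε x) y' ∧ T.HasFlowDeriv y' y'' ∧
      ε • y'' + y' + (ε * a) • T.dampedInverse a ε x = ε • x := by
  have prod := fastRoot_mul_slowRoot (a := a) hε
  have sum := mul_fastRoot_add_slowRoot hε hdisc
  have hz := T.hasFlowDeriv_resolvent (slowRoot_ne_zero ha hε) x
  have hy := T.hasFlowDeriv_resolvent (fastRoot_ne_zero (a := a) hε) (T.resolvent (slowRoot a ε) x)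
  refine ⟨_, _, hy, (hy.const_smul _).fun_add hz, ?_⟩
  simp only [dampedInverse, ContinuousLinearMap.comp_apply]
  generalize T.resolvent (slowRoot a ε) x = z
  generalize T.resolvent (fastRoot a ε) z = y
  generalize fastRoot a ε = l at *
  generalize slowRoot a ε = m at *
  subst prod
  linear_combination (norm := module) sum • (l • y + z)

theorem norm_dampedInverse_of_hasFlowDeriv_le (ha : a ≠ 0) (hε : ε ≠ 0) {x y : E}
    (h : T.HasFlowDeriv x y) : ‖T.dampedInverse a ε y‖ ≤ 4 * |ε| * ‖x‖ := by
  have hm := slowRoot_ne_zero ha hε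
  have inner_le : ‖T.resolvent (slowRoot a ε) y‖ ≤ 2 * ‖x‖ :=
    calc ‖T.resolvent (slowRoot a ε) y‖
      _ = ‖x + slowRoot a ε • T.resolvent (slowRoot a ε) x‖ := by
        rw [resolvent_of_hasFlowDeriv hm h]
      _ ≤ ‖x‖ + |slowRoot a ε| * (|slowRoot a ε|⁻¹ * ‖x‖) := by
        refine norm_add_le_of_le le_rfl ?_
        rw [norm_smul, Real.norm_eq_abs]
        gcongr
        exact T.norm_resolvent_apply_le _ _
      _ = 2 * ‖x‖ := by rw [mul_inv_cancel_left₀ (abs_ne_zero.2 hm), two_mul]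
  calc ‖T.dampedInverse a ε y‖
    _ ≤ |fastRoot a ε|⁻¹ * ‖T.resolvent (slowRoot a ε) y‖ := T.norm_resolvent_apply_le _ _
    _ ≤ 2 * |ε| * (2 * ‖x‖) := by gcongr; exact abs_inv_fastRoot_le
    _ = 4 * |ε| * ‖x‖ := by ring

theorem tendsto_dampedInverse_zero (ha : a ≠ 0) {x : E}
    (hx : x ∈ closure (T.generatorRange : Set E)) :
    Tendsto (fun ε => T.dampedInverse a ε x) (𝓝[≠] 0) (𝓝 0) := by
  rw [Metric.tendsto_nhds]
  intro δ hδ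
  obtain ⟨y, ⟨w, hw⟩, hxy⟩ := Metric.mem_closure_iff.1 hx (|a| * (δ / 2)) (by positivity)
  have small : ∀ᶠ ε in 𝓝[≠] (0 : ℝ), 4 * |ε| * ‖w‖ < δ / 2 := by
    have : Tendsto (fun ε : ℝ => 4 * |ε| * ‖w‖) (𝓝 0) (𝓝 0) :=
      Continuous.tendsto' (by fun_prop) 0 0 (by simp)
    exact (this.mono_left nhdsWithin_le_nhds).eventually (gt_mem_nhds (half_pos hδ))
  filter_upwards [small, self_mem_nhdsWithin] with ε hε_small hε
  rw [dist_zero_right, ← add_sub_cancel y x, map_add]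
  calc ‖T.dampedInverse a ε y + T.dampedInverse a ε (x - y)‖
    _ ≤ 4 * |ε| * ‖w‖ + |a|⁻¹ * ‖x - y‖ :=
      norm_add_le_of_le (T.norm_dampedInverse_of_hasFlowDeriv_le ha hε hw)
        (T.norm_dampedInverse_apply_le hε _)
    _ < δ / 2 + |a|⁻¹ * (|a| * (δ / 2)) := by
      rw [← dist_eq_norm]
      gcongr
    _ = δ := by rw [inv_mul_cancel_left₀ (abs_ne_zero.2 ha), add_halves]

end IsometricFlow

section Translations

variable {G F : Type*} [TopologicalSpace G] [AddCommGroup G] [IsTopologicalAddGroup G]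
  [NormedAddCommGroup F] [NormedSpace ℝ F]

/-- Translation of continuous functions by `θ`, that is, `h ↦ h (· + θ)`. -/
noncomputable def translateCLM (θ : G) : C(G, F) →L[ℝ] C(G, F) :=
  ContinuousMap.compCLM ℝ F ⟨fun x => x + θ, by fun_prop⟩

@[simp]
theorem translateCLM_apply (θ : G) (h : C(G, F)) (x : G) : translateCLM θ h x = h (x + θ) :=
  rfl

theorem translateCLM_zero (h : C(G, F)) : translateCLM 0 h = h := by
  ext x
  simp

theorem translateCLM_add (θ θ' : G) (h : C(G, F)) :
    translateCLM (θ + θ') h = translateCLM θ (translateCLM θ' h) := by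
  ext x
  simp [add_assoc]

theorem translateCLM_comm (θ θ' : G) (h : C(G, F)) :
    translateCLM θ (translateCLM θ' h) = translateCLM θ' (translateCLM θ h) := by
  rw [← translateCLM_add, add_comm, translateCLM_add]

theorem continuous_translateCLM (h : C(G, F)) : Continuous fun θ => translateCLM θ h :=
  ContinuousMap.continuous_of_continuous_uncurry _ <| by
    simp only [Function.uncurry_def, translateCLM_apply]
    fun_prop

variable [CompactSpace G]

theorem norm_translateCLM_le (θ : G) (h : C(G, F)) : ‖translateCLM θ h‖ ≤ ‖h‖ :=
  (ContinuousMap.norm_le _ (norm_nonneg h)).2 fun _ => h.norm_coe_le_norm _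

/-- The flow on continuous functions induced by translation along a one-parameter subgroup. -/
noncomputable def translationFlow (F : Type*) [NormedAddCommGroup F] [NormedSpace ℝ F]
    (γ : ℝ →ₜ+ G) : IsometricFlow C(G, F) where
  toFun t := translateCLM (γ t)
  map_zero_apply h := by rw [map_zero, translateCLM_zero]
  map_add_apply s t h := by rw [map_add, translateCLM_add]
  norm_apply_le t := norm_translateCLM_le (γ t)
  continuous_apply h := (continuous_translateCLM h).comp γ.continuous_toFun

@[simp]
theorem translationFlow_apply (γ : ℝ →ₜ+ G) (t : ℝ) (h : C(G, F)) :
    translationFlow F γ t h = translateCLM (γ t) h :=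
  rfl

theorem hasDerivAt_of_hasFlowDeriv_translationFlow {γ : ℝ →ₜ+ G} {w w' : C(G, F)}
    (h : (translationFlow F γ).HasFlowDeriv w w') (t : ℝ) :
    HasDerivAt (fun s => w (γ s)) (w' (γ t)) t := by
  have := (ContinuousMap.evalCLM ℝ (0 : G)).hasFDerivAt.comp_hasDerivAt t (h.hasDerivAt t)
  simpa [Function.comp_def] using this

end Translations

section MeanValue

/-- The embedding of a space as the constants among the continuous functions with values in it. -/
noncomputable def constCLM (X F : Type*) [TopologicalSpace X] [CompactSpace X]
    [NormedAddCommGroup F] [NormedSpace ℝ F] : F →L[ℝ] C(X, F) :=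
  LinearMap.mkContinuous
    { toFun := ContinuousMap.const X
      map_add' := fun _ _ => rfl
      map_smul' := fun _ _ => rfl }
    1 fun y => (ContinuousMap.norm_le _ (by positivity)).2 fun _ => (one_mul ‖y‖).ge

variable {X F : Type*} [TopologicalSpace X] [CompactSpace X] [MeasurableSpace X]
  [OpensMeasurableSpace X] (μ : Measure X) [IsProbabilityMeasure μ] [NormedAddCommGroup F]
  [NormedSpace ℝ F]

/-- The mean value of a continuous function with respect to a probability measure. -/
noncomputable def meanCLM (F : Type*) [NormedAddCommGroup F] [NormedSpace ℝ F] : C(X, F) →L[ℝ] F :=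
  LinearMap.mkContinuous
    { toFun := fun h => ∫ x, h x ∂μ
      map_add' := fun h k =>
        integral_add (h.continuous.integrable_of_hasCompactSupport (.of_compactSpace _))
          (k.continuous.integrable_of_hasCompactSupport (.of_compactSpace _))
      map_smul' := fun c h => integral_smul c h }
    1 fun h => (norm_integral_le_of_norm_le_const (.of_forall h.norm_coe_le_norm)).trans <| by
      simp

theorem norm_meanCLM_apply_le (h : C(X, F)) : ‖meanCLM μ F h‖ ≤ ‖h‖ := by
  simpa using (meanCLM μ F).le_of_opNorm_le (LinearMap.mkContinuous_norm_le _ zero_le_one _) h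

/-- The projection of continuous functions onto those of zero mean value, along the constants. -/
noncomputable def meanFree (F : Type*) [NormedAddCommGroup F] [NormedSpace ℝ F] :
    C(X, F) →L[ℝ] C(X, F) :=
  .id ℝ C(X, F) - constCLM X F ∘L meanCLM μ F

@[simp]
theorem meanFree_apply_apply (h : C(X, F)) (x : X) : meanFree μ F h x = h x - ∫ y, h y ∂μ :=
  rfl

theorem norm_meanFree_apply_le (h : C(X, F)) : ‖meanFree μ F h‖ ≤ 2 * ‖h‖ := by
  refine (ContinuousMap.norm_le _ (by positivity)).2 fun x => ?_
  rw [two_mul]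
  exact norm_sub_le_of_le (h.norm_coe_le_norm x) (norm_meanCLM_apply_le μ h)

section Complete

variable [CompleteSpace F]

theorem integral_meanFree (h : C(X, F)) : ∫ x, meanFree μ F h x ∂μ = 0 := by
  simp only [meanFree_apply_apply]
  rw [integral_sub (h.continuous.integrable_of_hasCompactSupport (.of_compactSpace _))
    (integrable_const _), integral_const, probReal_univ, one_smul, sub_self]

theorem meanFree_const (c : F) : meanFree μ F (ContinuousMap.const X c) = 0 := by
  ext x
  simp

end Complete

theorem meanFree_translateCLM {G : Type*} [TopologicalSpace G] [AddCommGroup G]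
    [IsTopologicalAddGroup G] [CompactSpace G] [MeasurableSpace G] [BorelSpace G] (μ : Measure G)
    [IsProbabilityMeasure μ] [μ.IsAddRightInvariant] (θ : G) (h : C(G, F)) :
    meanFree μ F (translateCLM θ h) = translateCLM θ (meanFree μ F h) := by
  ext x
  simp [integral_add_right_eq_self (fun y => h y) θ]

end MeanValue

section AnalyticTranslates

theorem exists_lift_iteratedFDeriv {𝕜 V G W : Type*} [NontriviallyNormedField 𝕜]
    [NormedAddCommGroup V] [NormedSpace 𝕜 V] [TopologicalSpace G] [AddCommGroup G]
    [NormedAddCommGroup W] [NormedSpace 𝕜 W] [CompleteSpace W] {p : V →ₜ+ G}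
    (hp : Topology.IsQuotientMap p) {F : G → W}
    (hF : AnalyticOnNhd 𝕜 (fun ψ => F (p ψ)) Set.univ) (k : ℕ) :
    ∃ q : C(G, V [×k]→L[𝕜] W), ∀ ψ, q (p ψ) = iteratedFDeriv 𝕜 k (fun χ => F (p χ)) ψ := by
  let D : C(V, V [×k]→L[𝕜] W) :=
    ⟨iteratedFDeriv 𝕜 k fun χ => F (p χ), continuousOn_univ.1 (hF.iteratedFDeriv k).continuousOn⟩
  have factors : Function.FactorsThrough D p := fun ψ χ hψχ => by
    have period (ξ : V) : p (ξ + (χ - ψ)) = p ξ := by rw [map_add, map_sub, hψχ, sub_self, add_zero]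
    have := iteratedFDeriv_comp_add_right (𝕜 := 𝕜) (f := fun χ => F (p χ)) k (χ - ψ) ψ
    simp only [period, add_sub_cancel] at this
    exact this
  let p' : C(V, G) := ⟨p, p.continuous_toFun⟩
  have hp' : Topology.IsQuotientMap p' := hp
  exact ⟨hp'.lift D factors, DFunLike.congr_fun (hp'.lift_comp D factors)⟩

variable {V G W : Type*} [NormedAddCommGroup V] [NormedSpace ℝ V] [TopologicalSpace G]
  [AddCommGroup G] [IsTopologicalAddGroup G] [CompactSpace G] [NormedAddCommGroup W]
  [NormedSpace ℝ W] [CompleteSpace W]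

theorem analyticAt_zero_translateCLM {p : V →ₜ+ G} (hp : Topology.IsQuotientMap p) {B : Set V}
    (hB : IsCompact B) (hpB : p '' B = Set.univ) {F : C(G, W)}
    (hF : AnalyticOnNhd ℝ (fun ψ => F (p ψ)) Set.univ) :
    AnalyticAt ℝ (fun ψ => translateCLM (p ψ) F) 0 := by
  obtain ⟨r, hr, C, taylor⟩ := exists_taylorBoundOn_of_isCompact hB (hF.mono B.subset_univ)
  choose q hq using exists_lift_iteratedFDeriv hp hF
  have mem_image (x : G) : x ∈ p '' B := hpB ▸ Set.mem_univ x
  have superposition : AnalyticAt ℝ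
      (fun v : C(G, V) => F.comp ⟨fun x => x + p (v x), by fun_prop⟩) 0 := by
    refine analyticAt_zero_of_hasSum_pointwise (q := fun k => (k ! : ℝ)⁻¹ • q k) (C := C) hr
      (fun k => ?_) fun v x hv => ?_
    · rw [← le_div_iff₀ (by positivity)]
      refine (ContinuousMap.norm_le _ (by positivity)).2 fun x => ?_
      obtain ⟨ψ, hψ, rfl⟩ := mem_image x
      rw [le_div_iff₀ (by positivity), ContinuousMap.smul_apply, hq]
      exact taylor.norm_mul_pow_le ψ hψ k
    · obtain ⟨ψ, hψ, hψx⟩ := mem_image x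
      have := taylor.hasSum ψ hψ (v x) hv
      simp only [map_add, ← hq, hψx] at this
      exact this
  exact AnalyticAt.comp (f := constCLM G V) (x := 0)
    (by rwa [map_zero]) ((constCLM G V).analyticAt 0)

theorem analyticAt_translateCLM {p : V →ₜ+ G} (hp : Topology.IsQuotientMap p) {B : Set V}
    (hB : IsCompact B) (hpB : p '' B = Set.univ) {F : C(G, W)}
    (hF : AnalyticOnNhd ℝ (fun ψ => F (p ψ)) Set.univ) (ψ₀ : V) :
    AnalyticAt ℝ (fun ψ => translateCLM (p ψ) F) ψ₀ := by
  have analytic_sub : AnalyticAt ℝ (fun ψ => ψ - ψ₀) ψ₀ := analyticAt_id.sub analyticAt_const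
  have near_zero :=
    (analyticAt_zero_translateCLM hp hB hpB hF).comp_of_eq analytic_sub (sub_self ψ₀)
  have shifted := ((translateCLM (p ψ₀)).analyticAt _).comp near_zero
  simpa only [Function.comp_def, ← translateCLM_add, ← map_add, add_sub_cancel] using shifted

end AnalyticTranslates

section Torus

variable {ι : Type*}

/-- The covering of the torus `(ℝ / ℤ) ^ ι`, rescaled so that its periods are `2π`. -/
noncomputable def torusCover (ι : Type*) : (ι → ℝ) →ₜ+ UnitAddTorus ι where
  toFun ψ i := ((ψ i / (2 * Real.pi) : ℝ) : UnitAddCircle)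
  map_zero' := by
    ext i
    simp
  map_add' ψ χ := by
    ext i
    simp [add_div]
  continuous_toFun := continuous_pi fun i => (AddCircle.continuous_mk' 1).comp (by fun_prop)

theorem torusCover_apply (ψ : ι → ℝ) (i : ι) :
    torusCover ι ψ i = ((ψ i / (2 * Real.pi) : ℝ) : UnitAddCircle) :=
  rfl

theorem isOpenQuotientMap_torusCover : IsOpenQuotientMap (torusCover ι) := by
  have scaling : IsOpenQuotientMap fun s : ℝ => s / (2 * Real.pi) := by
    simpa [div_eq_mul_inv] using
      (Homeomorph.mulRight₀ (2 * Real.pi)⁻¹ (by positivity)).isOpenQuotientMap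
  exact IsOpenQuotientMap.piMap fun _ : ι => IsOpenQuotientMap.comp
    (QuotientAddGroup.isOpenQuotientMap_mk (N := AddSubgroup.zmultiples (1 : ℝ))) scaling

theorem image_torusCover_Icc :
    torusCover ι '' Set.Icc 0 (fun _ => 2 * Real.pi) = Set.univ := by
  refine Set.eq_univ_of_forall fun x => ?_
  have coordinate (i : ι) : ∃ s ∈ Set.Ico (0 : ℝ) (0 + 1), (s : UnitAddCircle) = x i := by
    rw [← Set.mem_image, AddCircle.coe_image_Ico_eq]
    exact Set.mem_univ _
  choose s hs hsx using coordinate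
  refine ⟨fun i => 2 * Real.pi * s i, ⟨fun i => ?_, fun i => ?_⟩, ?_⟩
  · exact mul_nonneg Real.two_pi_pos.le (hs i).1
  · exact mul_le_of_le_one_right Real.two_pi_pos.le (by linarith [(hs i).2])
  · ext i
    rw [torusCover_apply, mul_div_cancel_left₀ _ Real.two_pi_pos.ne', hsx]

theorem torusCover_single [DecidableEq ι] (i : ι) :
    torusCover ι (Pi.single i (2 * Real.pi)) = 0 := by
  ext j
  obtain rfl | hj := eq_or_ne j i
  · rw [torusCover_apply, Pi.single_eq_same, div_self Real.two_pi_pos.ne']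
    exact AddCircle.coe_period 1
  · simp [torusCover_apply, hj]

theorem torusCover_add_single [DecidableEq ι] (ψ : ι → ℝ) (i : ι) :
    torusCover ι (ψ + Pi.single i (2 * Real.pi)) = torusCover ι ψ := by
  rw [map_add, torusCover_single, add_zero]

theorem exists_eq_add_sum_zsmul_of_torusCover_eq [Fintype ι] [DecidableEq ι] {ψ χ : ι → ℝ}
    (h : torusCover ι ψ = torusCover ι χ) :
    ∃ n : ι → ℤ, χ = ψ + ∑ i, n i • (Pi.single i (2 * Real.pi) : ι → ℝ) := by
  have coordinate (i : ι) : ∃ n : ℤ, (n : ℝ) = χ i / (2 * Real.pi) - ψ i / (2 * Real.pi) := by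
    obtain ⟨n, hn⟩ := (AddCircle.coe_eq_zero_iff (1 : ℝ)).1
      ((AddCircle.coe_sub _ _ _).trans (sub_eq_zero.2 (congrFun h i).symm))
    exact ⟨n, by rw [← hn, zsmul_eq_mul, mul_one]⟩
  choose n hn using coordinate
  refine ⟨n, ?_⟩
  ext j
  simp only [Pi.add_apply, Finset.sum_apply, Pi.smul_apply, Pi.single_apply, smul_ite, smul_zero,
    Finset.sum_ite_eq, Finset.mem_univ, if_true]
  rw [zsmul_eq_mul, hn]
  field_simp
  ring

theorem exists_continuousMap_comp_torusCover_eq [Finite ι] [DecidableEq ι] {W : Type*}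
    [TopologicalSpace W] {h : (ι → ℝ) → W} (hc : Continuous h)
    (hper : ∀ i, Function.Periodic h (Pi.single i (2 * Real.pi))) :
    ∃ F : C(UnitAddTorus ι, W), ∀ ψ, F (torusCover ι ψ) = h ψ := by
  cases nonempty_fintype ι
  let cover : C(ι → ℝ, UnitAddTorus ι) := ⟨torusCover ι, (torusCover ι).continuous_toFun⟩
  have quotient : Topology.IsQuotientMap cover := isOpenQuotientMap_torusCover.isQuotientMap
  have factors : Function.FactorsThrough (⟨h, hc⟩ : C(ι → ℝ, W)) cover := fun ψ χ hψχ => by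
    obtain ⟨n, rfl⟩ := exists_eq_add_sum_zsmul_of_torusCover_eq hψχ
    have periodic : Function.Periodic h (∑ i, n i • (Pi.single i (2 * Real.pi) : ι → ℝ)) :=
      Finset.sum_induction _ (Function.Periodic h) (fun _ _ => .add_period)
        (fun ψ => by rw [add_zero]) fun i _ => (hper i).zsmul (n i)
    exact (periodic ψ).symm
  exact ⟨quotient.lift ⟨h, hc⟩ factors, DFunLike.congr_fun (quotient.lift_comp _ factors)⟩

open scoped Pointwise in
theorem smul_Icc_zero_const {c : ℝ} (hc : 0 < c) :
    c • Set.Icc (0 : ι → ℝ) (fun _ => 1) = Set.Icc 0 (fun _ => c) := by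
  ext x
  simp only [Set.mem_smul_set_iff_inv_smul_mem₀ hc.ne', Set.mem_Icc, Pi.le_def, Pi.smul_apply,
    smul_eq_mul, Pi.zero_apply, mul_nonneg_iff_of_pos_left (inv_pos.2 hc), inv_mul_le_iff₀ hc,
    mul_one]

variable [Fintype ι]

instance : IsProbabilityMeasure (volume : Measure UnitAddCircle) :=
  ⟨UnitAddCircle.measure_univ⟩

theorem measurePreserving_coe_pi_Ioc :
    MeasurePreserving (fun (x : ι → ℝ) i => (x i : UnitAddCircle))
      (volume.restrict (Set.univ.pi fun _ => Set.Ioc 0 1)) := by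
  have := measurePreserving_pi _ _ fun _ : ι => AddCircle.measurePreserving_mk 1 (0 : ℝ)
  rw [← Measure.restrict_pi_pi, zero_add] at this
  exact this

theorem setIntegral_Icc_torusCover (F : C(UnitAddTorus ι, ℝ)) :
    ((2 * Real.pi) ^ Fintype.card ι)⁻¹ *
      ∫ ψ in Set.Icc (0 : ι → ℝ) (fun _ => 2 * Real.pi), F (torusCover ι ψ) = ∫ x, F x := by
  have unscale (x : ι → ℝ) :
      torusCover ι ((2 * Real.pi) • x) = fun i => (x i : UnitAddCircle) := by
    ext i
    rw [torusCover_apply, Pi.smul_apply, smul_eq_mul,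
      mul_div_cancel_left₀ _ Real.two_pi_pos.ne']
  have rescaled := Measure.setIntegral_comp_smul_of_pos volume (fun ψ => F (torusCover ι ψ))
    (Set.Icc (0 : ι → ℝ) fun _ => 1) Real.two_pi_pos
  rw [smul_Icc_zero_const Real.two_pi_pos, Module.finrank_fintype_fun_eq_card, smul_eq_mul]
    at rescaled
  have ae_eq : (Set.univ.pi fun _ => Set.Ioc 0 1) =ᵐ[volume] Set.Icc (0 : ι → ℝ) fun _ => 1 :=
    Measure.univ_pi_Ioc_ae_eq_Icc
  rw [← rescaled, ← measurePreserving_coe_pi_Ioc.map_eq,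
    integral_map measurePreserving_coe_pi_Ioc.measurable.aemeasurable
      F.continuous.aestronglyMeasurable, setIntegral_congr_set ae_eq]
  simp only [unscale]

end Torus

section OneParameterSubgroup

/-- The image in `G` of the line through `ω`. -/
def oneParameterSubgroup {V G : Type*} [AddCommGroup V] [TopologicalSpace V] [Module ℝ V]
    [ContinuousSMul ℝ V] [AddCommGroup G] [TopologicalSpace G] (p : V →ₜ+ G) (ω : V) :
    ℝ →ₜ+ G where
  toFun t := p (t • ω)
  map_zero' := by rw [zero_smul, map_zero]
  map_add' s t := by rw [add_smul, map_add]
  continuous_toFun := p.continuous_toFun.comp (by fun_prop)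

@[simp]
theorem oneParameterSubgroup_apply {V G : Type*} [AddCommGroup V] [TopologicalSpace V]
    [Module ℝ V] [ContinuousSMul ℝ V] [AddCommGroup G] [TopologicalSpace G] (p : V →ₜ+ G) (ω : V)
    (t : ℝ) : oneParameterSubgroup p ω t = p (t • ω) :=
  rfl

end OneParameterSubgroup

section MeanFreeDerivatives

theorem meanFree_eq_self_of_hasFlowDeriv {G F : Type*} [TopologicalSpace G] [AddCommGroup G]
    [IsTopologicalAddGroup G] [CompactSpace G] [MeasurableSpace G] [BorelSpace G] {μ : Measure G}
    [IsProbabilityMeasure μ] [μ.IsAddRightInvariant] [NormedAddCommGroup F] [NormedSpace ℝ F]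
    {γ : ℝ →ₜ+ G} {w w' : C(G, F)} (h : (translationFlow F γ).HasFlowDeriv w w') :
    meanFree μ F w' = w' := by
  have mean_zero : ∫ x, w' x ∂μ = 0 :=
    h.map_eq_zero (meanCLM μ F) fun t z => integral_add_right_eq_self (fun x => z x) (γ t)
  ext x
  rw [meanFree_apply_apply, mean_zero, sub_zero]

theorem meanFree_compLeftContinuous {X F F' : Type*} [TopologicalSpace X] [CompactSpace X]
    [MeasurableSpace X] [OpensMeasurableSpace X] (μ : Measure X) [IsProbabilityMeasure μ]
    [NormedAddCommGroup F] [NormedSpace ℝ F] [CompleteSpace F] [NormedAddCommGroup F']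
    [NormedSpace ℝ F'] [CompleteSpace F'] (L : F →L[ℝ] F') (h : C(X, F)) :
    meanFree μ F' (L.compLeftContinuous ℝ X h) = L.compLeftContinuous ℝ X (meanFree μ F h) := by
  have integrable : Integrable h μ :=
    h.continuous.integrable_of_hasCompactSupport (.of_compactSpace _)
  ext x
  change L (h x) - ∫ y, L (h y) ∂μ = L (h x - ∫ y, h y ∂μ)
  rw [L.integral_comp_comm integrable, map_sub]

end MeanFreeDerivatives

section NonresonantFlow

variable {ι : Type*} [Fintype ι] {ω : ι → ℝ}

theorem mFourier_apply_add (ν : ι → ℤ) (x y : UnitAddTorus ι) :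
    UnitAddTorus.mFourier ν (x + y) = UnitAddTorus.mFourier ν x * UnitAddTorus.mFourier ν y := by
  simp [UnitAddTorus.mFourier, fourier_apply, AddCircle.toCircle_add, Finset.prod_mul_distrib]

theorem mFourier_torusCover (ν : ι → ℤ) (ψ : ι → ℝ) :
    UnitAddTorus.mFourier ν (torusCover ι ψ) =
      Complex.exp (Complex.I * ↑(∑ i, ψ i * (ν i : ℝ))) := by
  have coordinate (i : ι) : fourier (ν i) (torusCover ι ψ i) =
      Complex.exp (Complex.I * ↑(ψ i * (ν i : ℝ))) := by
    rw [torusCover_apply, fourier_coe_apply]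
    have : (Real.pi : ℂ) ≠ 0 := by exact_mod_cast Real.pi_ne_zero
    congr 1
    push_cast
    field_simp
  change ∏ i, fourier (ν i) (torusCover ι ψ i) = _
  rw [Finset.prod_congr rfl fun i _ => coordinate i, ← Complex.exp_sum, Complex.ofReal_sum,
    Finset.mul_sum]

theorem translationFlow_mFourier (ν : ι → ℤ) (t : ℝ) :
    translationFlow ℂ (oneParameterSubgroup (torusCover ι) ω) t (UnitAddTorus.mFourier ν) =
      Complex.exp (t * (Complex.I * ↑(∑ i, ω i * (ν i : ℝ)))) • UnitAddTorus.mFourier ν := by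
  ext x
  have frequency : ∑ i, (t • ω) i * (ν i : ℝ) = t * ∑ i, ω i * (ν i : ℝ) := by
    simp only [Pi.smul_apply, smul_eq_mul, mul_assoc, Finset.mul_sum]
  simp only [translationFlow_apply, translateCLM_apply, oneParameterSubgroup_apply,
    mFourier_apply_add, mFourier_torusCover, frequency, ContinuousMap.smul_apply, smul_eq_mul,
    Complex.ofReal_mul]
  rw [mul_comm, mul_left_comm]

theorem hasFlowDeriv_smul_mFourier (c : ℂ) (ν : ι → ℤ) :
    (translationFlow ℂ (oneParameterSubgroup (torusCover ι) ω)).HasFlowDeriv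
      (c • UnitAddTorus.mFourier ν)
      ((c * (Complex.I * ↑(∑ i, ω i * (ν i : ℝ)))) • UnitAddTorus.mFourier ν) := by
  set k : ℂ := Complex.I * ↑(∑ i, ω i * (ν i : ℝ)) with hk
  have exp_deriv : HasDerivAt (fun t : ℝ => c * Complex.exp (t * k)) (c * k) 0 := by
    simpa using ((((hasDerivAt_id (0 : ℂ)).mul_const k).cexp).comp_ofReal).const_mul c
  have flow_eq (t : ℝ) : translationFlow ℂ (oneParameterSubgroup (torusCover ι) ω) t
      (c • UnitAddTorus.mFourier ν) = (c * Complex.exp (t * k)) • UnitAddTorus.mFourier ν := by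
    rw [mul_smul, hk, ← translationFlow_mFourier]
    rfl
  simpa only [IsometricFlow.HasFlowDeriv, flow_eq] using
    exp_deriv.smul_const (UnitAddTorus.mFourier ν)

variable {μ : Measure (UnitAddTorus ι)} [IsProbabilityMeasure μ] [μ.IsAddRightInvariant]

theorem meanFree_smul_mFourier_mem_generatorRange
    (hω : ∀ ν : ι → ℤ, ν ≠ 0 → ∑ i, ω i * (ν i : ℝ) ≠ 0) (c : ℂ) (ν : ι → ℤ) :
    meanFree μ ℂ (c • UnitAddTorus.mFourier ν) ∈
      (translationFlow ℂ (oneParameterSubgroup (torusCover ι) ω)).generatorRange := by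
  obtain rfl | hν := eq_or_ne ν 0
  · have const_eq : c • UnitAddTorus.mFourier (0 : ι → ℤ) = ContinuousMap.const _ c := by
      ext x
      simp [UnitAddTorus.mFourier_zero]
    rw [const_eq, meanFree_const]
    exact zero_mem _
  · have frequency_ne : Complex.I * ↑(∑ i, ω i * (ν i : ℝ)) ≠ 0 :=
      mul_ne_zero Complex.I_ne_zero (Complex.ofReal_ne_zero.2 (hω ν hν))
    have primitive := hasFlowDeriv_smul_mFourier (ω := ω)
      (c / (Complex.I * ↑(∑ i, ω i * (ν i : ℝ)))) ν
    rw [div_mul_cancel₀ c frequency_ne] at primitive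
    rw [meanFree_eq_self_of_hasFlowDeriv primitive]
    exact ⟨_, primitive⟩

theorem meanFree_complex_mem_closure_generatorRange
    (hω : ∀ ν : ι → ℤ, ν ≠ 0 → ∑ i, ω i * (ν i : ℝ) ≠ 0) (h : C(UnitAddTorus ι, ℂ)) :
    meanFree μ ℂ h ∈ closure
      ((translationFlow ℂ (oneParameterSubgroup (torusCover ι) ω)).generatorRange : Set _) := by
  have trigonometric_dense : h ∈
      closure (Submodule.span ℂ (Set.range (UnitAddTorus.mFourier (d := ι))) : Set _) := by
    rw [← Submodule.topologicalClosure_coe, UnitAddTorus.span_mFourier_closure_eq_top]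
    exact Submodule.mem_top
  refine map_mem_closure (meanFree μ ℂ).continuous trigonometric_dense fun P hP => ?_
  obtain ⟨c, rfl⟩ := Finsupp.mem_span_range_iff_exists_finsupp.1 hP
  rw [Finsupp.sum, map_sum]
  exact sum_mem fun ν _ => meanFree_smul_mFourier_mem_generatorRange hω (c ν) ν

theorem meanFree_mem_closure_generatorRange
    (hω : ∀ ν : ι → ℤ, ν ≠ 0 → ∑ i, ω i * (ν i : ℝ) ≠ 0) (h : C(UnitAddTorus ι, ℝ)) :
    meanFree μ ℝ h ∈ closure
      ((translationFlow ℝ (oneParameterSubgroup (torusCover ι) ω)).generatorRange : Set _) := by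
  have := IsometricFlow.map_mem_closure_generatorRange
    (T' := translationFlow ℝ (oneParameterSubgroup (torusCover ι) ω))
    (Complex.reCLM.compLeftContinuous ℝ _) (fun _ _ => rfl)
    (meanFree_complex_mem_closure_generatorRange (μ := μ) hω
      (Complex.ofRealCLM.compLeftContinuous ℝ _ h))
  rw [← meanFree_compLeftContinuous] at this
  exact this

end NonresonantFlow

section LocalRemainder

theorem exists_lipschitzWith_analytic_remainder {g : ℝ → ℝ} {c : ℝ} (hg : AnalyticAt ℝ g c)
    {κ : ℝ≥0} (hκ : 0 < κ) :
    ∃ Q, LipschitzWith κ Q ∧ ∃ r > 0, ∀ y, |y| < r →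
      Q y = g (c + y) - g c - deriv g c * y ∧ AnalyticAt ℝ Q y := by
  obtain ⟨Q, hQlip, hQeq⟩ :=
    exists_lipschitzWith_eventuallyEq_remainder hg.hasStrictDerivAt.hasStrictFDerivAt hκ
  have shift : AnalyticAt ℝ (fun y => c + y) 0 := analyticAt_const.add analyticAt_id
  have remainder : AnalyticAt ℝ
      (fun y => g (c + y) - g c - ContinuousLinearMap.toSpanSingleton ℝ (deriv g c) y) 0 :=
    ((hg.comp_of_eq shift (add_zero c)).sub analyticAt_const).sub
      (ContinuousLinearMap.analyticAt _ 0)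
  obtain ⟨r, hr, near⟩ := Metric.eventually_nhds_iff.1
    (hQeq.and (remainder.congr hQeq.symm).eventually_analyticAt)
  refine ⟨Q, hQlip, r, hr, fun y hy => ?_⟩
  obtain ⟨Q_eq, analytic⟩ := near (y := y) (by simpa using hy)
  exact ⟨by simpa [mul_comm] using Q_eq, analytic⟩

end LocalRemainder

section RangeEquation

variable {G : Type*} [TopologicalSpace G] [AddCommGroup G] [IsTopologicalAddGroup G]
  [CompactSpace G] [MeasurableSpace G] [BorelSpace G]

/-- The inverse of `y ↦ y'' + ε⁻¹ y' + a y` on functions of zero mean value, where the derivatives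
are taken along the one-parameter subgroup `γ`, composed with the projection onto these
functions. -/
noncomputable def rangeInverse (γ : ℝ →ₜ+ G) (μ : Measure G) [IsProbabilityMeasure μ] (a ε : ℝ) :
    C(G, ℝ) →L[ℝ] C(G, ℝ) :=
  (translationFlow ℝ γ).dampedInverse a ε ∘L meanFree μ ℝ

variable {γ : ℝ →ₜ+ G} {μ : Measure G} [IsProbabilityMeasure μ] {a ε : ℝ}

theorem norm_rangeInverse_apply_le (hε : ε ≠ 0) (h : C(G, ℝ)) :
    ‖rangeInverse γ μ a ε h‖ ≤ 2 * |a|⁻¹ * ‖h‖ :=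
  calc ‖rangeInverse γ μ a ε h‖
    _ ≤ |a|⁻¹ * ‖meanFree μ ℝ h‖ := (translationFlow ℝ γ).norm_dampedInverse_apply_le hε _
    _ ≤ |a|⁻¹ * (2 * ‖h‖) := by
      gcongr
      exact norm_meanFree_apply_le μ h
    _ = 2 * |a|⁻¹ * ‖h‖ := by ring

theorem lipschitzWith_rangeInverse_comp (hε : ε ≠ 0) {P : C(ℝ, ℝ)} {κ : ℝ≥0}
    (hP : LipschitzWith κ P) :
    LipschitzWith (2 * ‖a‖₊⁻¹ * κ) fun v => rangeInverse γ μ a ε (P.comp v) := by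
  refine .of_dist_le_mul fun v w => ?_
  have comp_le : ‖P.comp v - P.comp w‖ ≤ κ * ‖v - w‖ :=
    (ContinuousMap.norm_le _ (by positivity)).2 fun x =>
      (hP.norm_sub_le (v x) (w x)).trans <| by
        gcongr
        exact (v - w).norm_coe_le_norm x
  rw [dist_eq_norm, dist_eq_norm, ← map_sub]
  calc ‖rangeInverse γ μ a ε (P.comp v - P.comp w)‖
    _ ≤ 2 * |a|⁻¹ * ‖P.comp v - P.comp w‖ := norm_rangeInverse_apply_le hε _
    _ ≤ 2 * |a|⁻¹ * (κ * ‖v - w‖) := by gcongr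
    _ = ↑(2 * ‖a‖₊⁻¹ * κ) * ‖v - w‖ := by
      push_cast
      rw [Real.norm_eq_abs]
      ring

theorem rangeInverse_const (c : ℝ) : rangeInverse γ μ a ε (.const G c) = 0 := by
  rw [rangeInverse, ContinuousLinearMap.comp_apply, meanFree_const, map_zero]

theorem tendsto_rangeInverse_zero (ha : a ≠ 0) {F : C(G, ℝ)}
    (hF : meanFree μ ℝ F ∈ closure ((translationFlow ℝ γ).generatorRange : Set C(G, ℝ))) :
    Tendsto (fun ε => rangeInverse γ μ a ε F) (𝓝[≠] 0) (𝓝 0) :=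
  (translationFlow ℝ γ).tendsto_dampedInverse_zero ha hF

section Invariant

variable [μ.IsAddRightInvariant]

theorem integral_rangeInverse (ha : a ≠ 0) (hε : ε ≠ 0) (h : C(G, ℝ)) :
    ∫ x, rangeInverse γ μ a ε h x ∂μ = 0 := by
  have commute := (translationFlow ℝ γ).map_dampedInverse (T' := translationFlow ℝ γ) ha hε
    (meanFree μ ℝ) (fun t => meanFree_translateCLM μ (γ t)) h
  rw [rangeInverse, ContinuousLinearMap.comp_apply, ← commute]
  exact integral_meanFree μ _

theorem rangeInverse_translateCLM (ha : a ≠ 0) (hε : ε ≠ 0) (θ : G) (h : C(G, ℝ)) :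
    rangeInverse γ μ a ε (translateCLM θ h) = translateCLM θ (rangeInverse γ μ a ε h) := by
  simp only [rangeInverse, ContinuousLinearMap.comp_apply, meanFree_translateCLM]
  exact ((translationFlow ℝ γ).map_dampedInverse ha hε (translateCLM θ)
    (fun t => translateCLM_comm θ (γ t)) _).symm

end Invariant

theorem exists_add_rangeInverse_comp_eq (hε : ε ≠ 0) {P : C(ℝ, ℝ)} {κ : ℝ≥0}
    (hP : LipschitzWith κ P) (hκ : 2 * ‖a‖₊⁻¹ * κ < 1) (F : C(G, ℝ)) :
    ∃ U, U + rangeInverse γ μ a ε (P.comp U) = rangeInverse γ μ a ε F ∧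
      (1 - (2 * ‖a‖₊⁻¹ * κ : ℝ≥0)) * ‖U‖ ≤ ‖rangeInverse γ μ a ε F‖ := by
  obtain ⟨U, hU, hUle⟩ := exists_add_eq_of_lipschitzWith
    (lipschitzWith_rangeInverse_comp (γ := γ) (μ := μ) hε hP) hκ (rangeInverse γ μ a ε F)
  have comp_zero : P.comp (0 : C(G, ℝ)) = .const G (P 0) := rfl
  rw [comp_zero, rangeInverse_const, sub_zero] at hUle
  exact ⟨U, hU, hUle⟩

theorem analyticOnNhd_comp_of_add_rangeInverse_comp_eq [μ.IsAddRightInvariant] (ha : a ≠ 0)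
    (hε : ε ≠ 0) {V : Type*} [NormedAddCommGroup V] [NormedSpace ℝ V] {p : V →ₜ+ G}
    (hp : Topology.IsQuotientMap p) {B : Set V} (hB : IsCompact B) (hpB : p '' B = Set.univ)
    {F U : C(G, ℝ)} (hF : AnalyticOnNhd ℝ (fun ψ => F (p ψ)) Set.univ) {P : C(ℝ, ℝ)} {κ : ℝ≥0}
    (hP : LipschitzWith κ P) (hκ : 2 * ‖a‖₊⁻¹ * κ < 1) (hPU : AnalyticOnNhd ℝ P (Set.range U))
    (hU : U + rangeInverse γ μ a ε (P.comp U) = rangeInverse γ μ a ε F) :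
    AnalyticOnNhd ℝ (fun ψ => U (p ψ)) Set.univ := by
  intro ψ₀ _
  have translated_eq (ψ : V) : translateCLM (p ψ) U +
      rangeInverse γ μ a ε (P.comp (translateCLM (p ψ) U)) =
        rangeInverse γ μ a ε (translateCLM (p ψ) F) := by
    rw [rangeInverse_translateCLM ha hε, ← hU, map_add, ← rangeInverse_translateCLM ha hε]
    rfl
  have range_subset : Set.range (translateCLM (p ψ₀) U) ⊆ Set.range U :=
    Set.range_comp_subset_range _ U
  have translates : AnalyticAt ℝ (fun ψ => translateCLM (p ψ) U) ψ₀ := by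
    refine analyticAt_of_add_comp (B := fun v => rangeInverse γ μ a ε (P.comp v))
      (((rangeInverse γ μ a ε).analyticAt _).comp
        (analyticAt_continuousMap_comp (hPU.mono range_subset)))
      (lipschitzWith_rangeInverse_comp hε hP) hκ
      ((continuous_translateCLM U).comp p.continuous_toFun).continuousAt ?_
    simp only [translated_eq]
    exact ((rangeInverse γ μ a ε).analyticAt _).comp (analyticAt_translateCLM hp hB hpB hF ψ₀)
  have eval_zero := ((ContinuousMap.evalCLM ℝ (0 : G)).analyticAt _).comp translates
  simpa [Function.comp_def] using eval_zero

theorem deriv_equation_of_eq_rangeInverse (ha : a ≠ 0) (hε : ε ≠ 0) (hdisc : 4 * a * ε ^ 2 ≤ 1)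
    {U h : C(G, ℝ)} (hU : U = rangeInverse γ μ a ε h) (b t : ℝ) :
    ε * deriv (deriv fun s => b + U (γ s)) t + deriv (fun s => b + U (γ s)) t +
      ε * a * U (γ t) = ε * (h (γ t) - ∫ x, h x ∂μ) := by
  obtain ⟨U', U'', hU', hU'', equation⟩ :=
    (translationFlow ℝ γ).exists_hasFlowDeriv_dampedInverse ha hε hdisc (meanFree μ ℝ h)
  have eq_damped : (translationFlow ℝ γ).dampedInverse a ε (meanFree μ ℝ h) = U := hU.symm
  rw [eq_damped] at hU' equation
  have deriv_eq : deriv (fun s => b + U (γ s)) = fun s => U' (γ s) := funext fun s =>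
    ((hasDerivAt_of_hasFlowDeriv_translationFlow hU' s).const_add b).deriv
  rw [deriv_eq, (hasDerivAt_of_hasFlowDeriv_translationFlow hU'' t).deriv]
  exact DFunLike.congr_fun equation (γ t)

variable [μ.IsAddRightInvariant] {V : Type*} [NormedAddCommGroup V] [NormedSpace ℝ V]
  {p : V →ₜ+ G} {B : Set V} {F : C(G, ℝ)}

theorem exists_solution_of_norm_rangeInverse_lt (ha : a ≠ 0) (hε : ε ≠ 0)
    (hdisc : 4 * a * ε ^ 2 ≤ 1) (hp : Topology.IsQuotientMap p) (hB : IsCompact B)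
    (hpB : p '' B = Set.univ) (hF : AnalyticOnNhd ℝ (fun ψ => F (p ψ)) Set.univ) {Q : ℝ → ℝ}
    (hQ : LipschitzWith (‖a‖₊ / 8) Q) {r : ℝ} (hQr : ∀ y, |y| < r → AnalyticAt ℝ Q y)
    (hFr : ‖rangeInverse γ μ a ε F‖ < 3 / 8 * r) {ζ : ℝ} (hζ : |ζ| < r / 2) :
    ∃ (U : C(G, ℝ)) (m : ℝ), (∀ x, |ζ + U x| < r) ∧
      AnalyticOnNhd ℝ (fun ψ => U (p ψ)) Set.univ ∧ ∫ x, U x ∂μ = 0 ∧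
      ∀ b t, ε * deriv (deriv fun s => b + U (γ s)) t + deriv (fun s => b + U (γ s)) t +
        ε * a * U (γ t) = ε * (F (γ t) - Q (ζ + U (γ t)) - m) := by
  let P : C(ℝ, ℝ) := ⟨fun y => Q (ζ + y), hQ.continuous.comp (continuous_const_add ζ)⟩
  have hP : LipschitzWith (‖a‖₊ / 8) P := fun y z => by simpa [P] using hQ (ζ + y) (ζ + z)
  have contraction : 2 * ‖a‖₊⁻¹ * (‖a‖₊ / 8) = 1 / 4 := by
    have : ‖a‖₊ ≠ 0 := nnnorm_ne_zero_iff.2 ha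
    field_simp
    norm_num
  have hκ : 2 * ‖a‖₊⁻¹ * (‖a‖₊ / 8) < 1 := by
    rw [contraction, div_lt_one] <;> norm_num
  obtain ⟨U, hU, norm_le⟩ := exists_add_rangeInverse_comp_eq (γ := γ) (μ := μ) hε hP hκ F
  have bound (x : G) : |ζ + U x| < r := by
    rw [contraction] at norm_le
    push_cast at norm_le
    have := abs_add_le ζ (U x)
    have := U.norm_coe_le_norm x
    rw [Real.norm_eq_abs] at this
    linarith
  have hPU : AnalyticOnNhd ℝ P (Set.range U) := by
    rintro _ ⟨x, rfl⟩
    exact AnalyticAt.comp (f := fun y => ζ + y) (hQr _ (bound x))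
      (analyticAt_const.add analyticAt_id)
  have eq_rangeInverse : U = rangeInverse γ μ a ε (F - P.comp U) := by
    rw [map_sub, ← hU, add_sub_cancel_right]
  refine ⟨U, ∫ x, (F - P.comp U) x ∂μ, bound,
    analyticOnNhd_comp_of_add_rangeInverse_comp_eq ha hε hp hB hpB hF hP hκ hPU hU, ?_,
    deriv_equation_of_eq_rangeInverse ha hε hdisc eq_rangeInverse⟩
  rw [eq_rangeInverse]
  exact integral_rangeInverse ha hε _

theorem exists_eventually_exists_solution {g : ℝ → ℝ} {c₀ : ℝ} (hg : AnalyticAt ℝ g c₀)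
    (ha : deriv g c₀ ≠ 0) (hp : Topology.IsQuotientMap p) (hB : IsCompact B)
    (hpB : p '' B = Set.univ) (hF : AnalyticOnNhd ℝ (fun ψ => F (p ψ)) Set.univ)
    (hFγ : meanFree μ ℝ F ∈ closure ((translationFlow ℝ γ).generatorRange : Set C(G, ℝ))) :
    ∃ ζb > 0, ∀ᶠ ε in 𝓝[≠] 0, ∀ ζ, |ζ| < ζb → ∃ (U : C(G, ℝ)) (R : ℝ),
      AnalyticOnNhd ℝ (fun ψ => U (p ψ)) Set.univ ∧ ∫ x, U x ∂μ = 0 ∧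
      ∀ t, ε * deriv (deriv fun s => c₀ + ζ + U (γ s)) t +
        deriv (fun s => c₀ + ζ + U (γ s)) t + ε * g (c₀ + ζ + U (γ t)) =
          ε * F (γ t) + ε * R := by
  have lipschitz_pos : 0 < ‖deriv g c₀‖₊ / 8 := div_pos (nnnorm_pos.2 ha) (by norm_num)
  obtain ⟨Q, hQ, r, hr, hQr⟩ := exists_lipschitzWith_analytic_remainder hg lipschitz_pos
  have small : ∀ᶠ ε in 𝓝[≠] 0, ‖rangeInverse γ μ (deriv g c₀) ε F‖ < 3 / 8 * r :=
    (tendsto_rangeInverse_zero ha hFγ).norm.eventually_lt_const <| by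
      rw [norm_zero]
      positivity
  have disc : ∀ᶠ ε : ℝ in 𝓝[≠] 0, 4 * deriv g c₀ * ε ^ 2 ≤ 1 := by
    have : ContinuousAt (fun ε : ℝ => 4 * deriv g c₀ * ε ^ 2) 0 := by fun_prop
    exact nhdsWithin_le_nhds ((this.eventually_lt_const (by simp)).mono fun _ => le_of_lt)
  refine ⟨r / 2, half_pos hr, ?_⟩
  filter_upwards [small, disc, self_mem_nhdsWithin] with ε hsmall hdisc hε ζ hζ
  obtain ⟨U, m, bound, analytic, mean_zero, equation⟩ := exists_solution_of_norm_rangeInverse_lt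
    ha hε hdisc hp hB hpB hF hQ (fun y hy => (hQr y hy).2) hsmall hζ
  refine ⟨U, g c₀ + deriv g c₀ * ζ - m, analytic, mean_zero, fun t => ?_⟩
  have linearized := equation (c₀ + ζ) t
  rw [(hQr _ (bound (γ t))).1, ← add_assoc] at linearized
  linear_combination linearized

end RangeEquation

theorem range_equation_solvable_general {ι : Type*} [Fintype ι] [DecidableEq ι] (ω : ι → ℝ)
    (hω : ∀ ν : ι → ℤ, ν ≠ 0 → (∑ i, ω i * (ν i : ℝ)) ≠ 0)
    (f : (ι → ℝ) → ℝ) (g : ℝ → ℝ) (hf : ∀ ψ, AnalyticAt ℝ f ψ)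
    (hfper : ∀ (ψ : ι → ℝ) (i : ι), f (ψ + Pi.single i (2 * Real.pi)) = f ψ)
    (c₀ : ℝ) (hg : AnalyticAt ℝ g c₀) (ha : deriv g c₀ ≠ 0) :
    ∃ εb > (0 : ℝ), ∃ ζb > (0 : ℝ),
      ∀ ε : ℝ, 0 < |ε| → |ε| < εb → ∀ ζ : ℝ, |ζ| < ζb →
        ∃ (u : (ι → ℝ) → ℝ) (R : ℝ),
          (∀ ψ : ι → ℝ, AnalyticAt ℝ u ψ) ∧
          (∀ (ψ : ι → ℝ) (i : ι), u (ψ + Pi.single i (2 * Real.pi)) = u ψ) ∧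
          (((2 * Real.pi) ^ Fintype.card ι)⁻¹ *
            ∫ ψ in Set.Icc (0 : ι → ℝ) (fun _ => 2 * Real.pi), u ψ) = 0 ∧
          (∀ t : ℝ,
            ε * deriv (deriv (fun s : ℝ => c₀ + ζ + u (s • ω))) t
              + deriv (fun s : ℝ => c₀ + ζ + u (s • ω)) t
              + ε * g (c₀ + ζ + u (t • ω))
              = ε * f (t • ω) + ε * R) := by
  have continuous_f : Continuous f := continuous_iff_continuousAt.2 fun ψ => (hf ψ).continuousAt
  obtain ⟨F, hF⟩ :=
    exists_continuousMap_comp_torusCover_eq continuous_f fun i ψ => hfper ψ i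
  have analytic_F : AnalyticOnNhd ℝ (fun ψ => F (torusCover ι ψ)) Set.univ := by
    simp only [hF]
    exact fun ψ _ => hf ψ
  obtain ⟨ζb, hζb, solvable⟩ := exists_eventually_exists_solution (μ := volume) hg ha
    isOpenQuotientMap_torusCover.isQuotientMap isCompact_Icc image_torusCover_Icc analytic_F
    (meanFree_mem_closure_generatorRange hω F)
  obtain ⟨εb, hεb, solvable⟩ := Metric.eventually_nhds_iff.1 (eventually_nhdsWithin_iff.1 solvable)
  refine ⟨εb, hεb, ζb, hζb, fun ε hε hεlt ζ hζ => ?_⟩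
  obtain ⟨U, R, analytic, mean_zero, equation⟩ :=
    solvable (by simpa using hεlt) (abs_pos.1 hε) ζ hζ
  refine ⟨fun ψ => U (torusCover ι ψ), R, fun ψ => analytic ψ trivial,
    fun ψ i => congrArg U (torusCover_add_single ψ i),
    (setIntegral_Icc_torusCover U).trans mean_zero, fun t => ?_⟩
  simpa only [oneParameterSubgroup_apply, hF] using equation t

/-- **Solvability of the range equation.**
For nonresonant `ω`, analytic periodic `f` with mean `f₀`, analytic `g` with `g(c₀) = f₀`
and `a := g'(c₀) ≠ 0`, there are `ε̄, ζ̄ > 0` such that for every `0 < |ε| < ε̄` and every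
`|ζ| < ζ̄` there exist a real analytic, periodic, zero-mean function `u` and a constant `R`
such that `x(t) = c₀ + ζ + u(ωt)` satisfies
`ε x'' + x' + ε g(x) = ε f(ωt) + ε R` for all `t`. -/
theorem range_equation_solvable
    (d : ℕ) (hd : 1 ≤ d) (ω : Fin d → ℝ)
    (hω : ∀ ν : Fin d → ℤ, ν ≠ 0 → (∑ i, ω i * (ν i : ℝ)) ≠ 0)
    (f : (Fin d → ℝ) → ℝ) (g : ℝ → ℝ)
    (hf : ∀ ψ : Fin d → ℝ, AnalyticAt ℝ f ψ)
    (hfper : ∀ (ψ : Fin d → ℝ) (i : Fin d), f (ψ + Pi.single i (2 * Real.pi)) = f ψ)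
    (hg : ∀ x : ℝ, AnalyticAt ℝ g x)
    (f₀ : ℝ)
    (hf₀ : f₀ = ((2 * Real.pi) ^ d)⁻¹ *
      ∫ ψ in Set.Icc (0 : Fin d → ℝ) (fun _ => 2 * Real.pi), f ψ)
    (c₀ : ℝ) (hzero : g c₀ = f₀) (ha : deriv g c₀ ≠ 0) :
    ∃ εb > (0 : ℝ), ∃ ζb > (0 : ℝ),
      ∀ ε : ℝ, 0 < |ε| → |ε| < εb → ∀ ζ : ℝ, |ζ| < ζb →
        ∃ (u : (Fin d → ℝ) → ℝ) (R : ℝ),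
          (∀ ψ : Fin d → ℝ, AnalyticAt ℝ u ψ) ∧
          (∀ (ψ : Fin d → ℝ) (i : Fin d), u (ψ + Pi.single i (2 * Real.pi)) = u ψ) ∧
          (((2 * Real.pi) ^ d)⁻¹ *
            ∫ ψ in Set.Icc (0 : Fin d → ℝ) (fun _ => 2 * Real.pi), u ψ) = 0 ∧
          (∀ t : ℝ,
            ε * deriv (deriv (fun s : ℝ => c₀ + ζ + u (s • ω))) t
              + deriv (fun s : ℝ => c₀ + ζ + u (s • ω)) t
              + ε * g (c₀ + ζ + u (t • ω))
              = ε * f (t • ω) + ε * R) := by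
  simpa using range_equation_solvable_general ω hω f g hf hfper c₀ (hg c₀) ha
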